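/- For every p ∈ ℝ^n with p ≥ 0 entrywise and every k ∈ {1,…,n}, the set function f : 2^{[n]} → ℝ defined by f(J) = Top_k(p⟨J⟩) is submodular, i.e., f(A) + f(B) ≥ f(A ∪ B) + f(A ∩ B) for all A, B ⊆ {1,…,n}. -/

import Mathlib

/-- The top-`k` norm: the sum of the `k` largest values among `|u 1|, …, |u n|`,
expressed as the supremum over all size-`k` subsets of the sum of absolute values. -/
noncomputable def topk {n : ℕ} (k : ℕ) (u : Fin n → ℝ) : ℝ :=
  sSup {t : ℝ | ∃ S : Finset (Fin n), S.card = k ∧ t = ∑ j ∈ S, |u j|}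

/-- `p⟨J⟩`: the vector whose `j`-th entry is `p j` if `j ∈ J` and `0` otherwise. -/
def restrictVec {n : ℕ} (p : Fin n → ℝ) (J : Finset (Fin n)) : Fin n → ℝ :=
  fun j => if j ∈ J then p j else 0

/-!
Let `S ⊆ A ∪ B` and `T ⊆ A ∩ B` attain `Top_k(p⟨A ∪ B⟩)` and `Top_k(p⟨A ∩ B⟩)`. The multiset union
of `S` and `T` can be redistributed into sets `S' ⊆ A` and `T' ⊆ B` with at most `k` elements each:
`S \ B` must go to `S'`, `S \ A` to `T'`, and `S ∩ T` to both, while the remaining elements lie in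
`A ∩ B` and may be used to balance the cardinalities. The total weight is unchanged, and `S'`, `T'`
are competitors for `Top_k(p⟨A⟩)` and `Top_k(p⟨B⟩)`.
-/

open Finset

theorem exists_subset_subset_card_le_union_eq_inter_eq {α : Type*} [DecidableEq α] {k : ℕ}
    {A B S T : Finset α} (hS : S ⊆ A ∪ B) (hT : T ⊆ A ∩ B) (hSk : #S ≤ k) (hTk : #T ≤ k) :
    ∃ S' ⊆ A, ∃ T' ⊆ B, #S' ≤ k ∧ #T' ≤ k ∧ S' ∪ T' = S ∪ T ∧ S' ∩ T' = S ∩ T := by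
  have forced_subset : S \ B ∪ S ∩ T ⊆ (S ∪ T) ∩ A := by grind
  have T_subset : T ⊆ (S ∪ T) ∩ A := by grind
  have forced_card_le : #(S \ B ∪ S ∩ T) ≤ #S := card_le_card (by grind)
  -- `#S' ≥ #T` gives `#T' ≤ #S`, since the cardinalities have the same sum.
  obtain ⟨S', hforced, hS', hS'card⟩ :=
    exists_subsuperset_card_eq forced_subset (le_max_left _ #T)
      (max_le (card_le_card forced_subset) (card_le_card T_subset))
  let T' := (S ∪ T) \ S' ∪ S ∩ T
  have hunion : S' ∪ T' = S ∪ T := by grind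
  have hinter : S' ∩ T' = S ∩ T := by grind
  have hcard : #S' + #T' = #S + #T := by
    rw [← card_union_add_card_inter, hunion, hinter, card_union_add_card_inter]
  exact ⟨S', by grind, T', by grind, by omega, by omega, hunion, hinter⟩

section TopK

variable {n k : ℕ}

theorem isGreatest_topk (hkn : k ≤ n) (u : Fin n → ℝ) :
    IsGreatest {t : ℝ | ∃ S : Finset (Fin n), #S = k ∧ t = ∑ j ∈ S, |u j|} (topk k u) := by
  have hfinite : {t : ℝ | ∃ S : Finset (Fin n), #S = k ∧ t = ∑ j ∈ S, |u j|}.Finite :=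
    (Set.finite_range fun S : Finset (Fin n) => ∑ j ∈ S, |u j|).subset
      fun _ ⟨S, _, hS⟩ => ⟨S, hS.symm⟩
  obtain ⟨S, -, hS⟩ := exists_subset_card_eq (s := (univ : Finset (Fin n))) (by simpa using hkn)
  exact ⟨Set.Nonempty.csSup_mem ⟨_, S, hS, rfl⟩ hfinite, fun _ ht => le_csSup hfinite.bddAbove ht⟩

theorem sum_abs_le_topk (hkn : k ≤ n) (u : Fin n → ℝ) {S : Finset (Fin n)} (hS : #S ≤ k) :
    ∑ j ∈ S, |u j| ≤ topk k u := by
  obtain ⟨T, hST, hT⟩ := exists_superset_card_eq hS (by simpa using hkn)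
  calc ∑ j ∈ S, |u j| ≤ ∑ j ∈ T, |u j| :=
        sum_le_sum_of_subset_of_nonneg hST fun j _ _ => abs_nonneg (u j)
    _ ≤ topk k u := (isGreatest_topk hkn u).2 ⟨T, hT, rfl⟩

theorem sum_abs_restrictVec (p : Fin n → ℝ) (S J : Finset (Fin n)) :
    ∑ j ∈ S, |restrictVec p J j| = ∑ j ∈ S ∩ J, |p j| := by
  simp only [restrictVec, apply_ite abs, abs_zero, sum_ite_mem]

theorem sum_abs_le_topk_restrictVec (hkn : k ≤ n) (p : Fin n → ℝ) {S J : Finset (Fin n)}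
    (hSJ : S ⊆ J) (hS : #S ≤ k) : ∑ j ∈ S, |p j| ≤ topk k (restrictVec p J) := by
  simpa only [sum_abs_restrictVec, inter_eq_left.mpr hSJ] using
    sum_abs_le_topk hkn (restrictVec p J) hS

theorem exists_subset_topk_restrictVec_eq_sum_abs (hkn : k ≤ n) (p : Fin n → ℝ)
    (J : Finset (Fin n)) :
    ∃ S ⊆ J, #S ≤ k ∧ topk k (restrictVec p J) = ∑ j ∈ S, |p j| := by
  obtain ⟨S, hS, htopk⟩ := (isGreatest_topk hkn (restrictVec p J)).1
  exact ⟨S ∩ J, inter_subset_right, (card_le_card inter_subset_left).trans hS.le,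
    htopk.trans (sum_abs_restrictVec p S J)⟩

theorem topk_restrict_submodular_general (hkn : k ≤ n) (p : Fin n → ℝ) (A B : Finset (Fin n)) :
    topk k (restrictVec p (A ∪ B)) + topk k (restrictVec p (A ∩ B)) ≤
      topk k (restrictVec p A) + topk k (restrictVec p B) := by
  obtain ⟨S, hS, hSk, hSsum⟩ := exists_subset_topk_restrictVec_eq_sum_abs hkn p (A ∪ B)
  obtain ⟨T, hT, hTk, hTsum⟩ := exists_subset_topk_restrictVec_eq_sum_abs hkn p (A ∩ B)
  obtain ⟨S', hS', T', hT', hS'k, hT'k, hunion, hinter⟩ :=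
    exists_subset_subset_card_le_union_eq_inter_eq hS hT hSk hTk
  calc topk k (restrictVec p (A ∪ B)) + topk k (restrictVec p (A ∩ B))
      = ∑ j ∈ S, |p j| + ∑ j ∈ T, |p j| := by rw [hSsum, hTsum]
    _ = ∑ j ∈ S', |p j| + ∑ j ∈ T', |p j| := by
        rw [← sum_union_inter, ← hunion, ← hinter, sum_union_inter]
    _ ≤ topk k (restrictVec p A) + topk k (restrictVec p B) :=
        add_le_add (sum_abs_le_topk_restrictVec hkn p hS' hS'k)
          (sum_abs_le_topk_restrictVec hkn p hT' hT'k)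

end TopK

/-- For nonnegative `p ∈ ℝ^n` and `k ∈ {1,…,n}`, the set function
`f(J) = Top_k(p⟨J⟩)` is submodular: `f(A) + f(B) ≥ f(A ∪ B) + f(A ∩ B)`. -/
theorem topk_restrict_submodular {n : ℕ} (p : Fin n → ℝ) (hp : ∀ j, 0 ≤ p j)
    (k : ℕ) (hk1 : 1 ≤ k) (hkn : k ≤ n) (A B : Finset (Fin n)) :
    topk k (restrictVec p (A ∪ B)) + topk k (restrictVec p (A ∩ B)) ≤
      topk k (restrictVec p A) + topk k (restrictVec p B) :=
  topk_restrict_submodular_general hkn p A B
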